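/- Confluent divided difference formula: if f is sufficiently smooth and nodes x₀,...,xₙ are distinct, then the divided difference of f at the multiset where x_i is repeated k_i + 1 times equals (1/(k₀!⋯kₙ!)) ∂^{k₀}_{x₀}⋯∂^{kₙ}_{xₙ} f[x₀,...,xₙ]. -/

import Mathlib

open Filter Topology

/-- Divided difference of `f` at a list of nodes, via the standard recursion. -/
noncomputable def divDiff {K : Type*} [Field K] (f : K → K) : List K → K
  | [] => 0
  | [x] => f x
  | x :: y :: rest =>
      (divDiff f (y :: rest) - divDiff f (x :: (y :: rest).dropLast)) /
        ((y :: rest).getLast (by simp) - x)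
termination_by l => l.length
decreasing_by all_goals simp [List.length_dropLast]

/-- `k`-th partial derivative of a multivariate function in its `i`-th variable. -/
noncomputable def partialIter {m : ℕ} (g : (Fin m → ℝ) → ℝ) (i : Fin m) (k : ℕ) :
    (Fin m → ℝ) → ℝ :=
  fun x => iteratedDeriv k (fun s => g (Function.update x i s)) (x i)

/-!
Divided differences of a smooth `f` extend smoothly to coinciding nodes: replace the quotients by
`dslope`, so that `f[x, y, …]` is the divided difference of `dslope f x` at `y, …`. Hadamard's
formula `dslope f x y = ∫ s in 0..1, f' (x + s (y - x))` shows that `dslope` is jointly smooth, and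
`dslope` operators at two nodes commute, so the extension is smooth and symmetric in the nodes. It
agrees with `divDiff` at distinct nodes, hence its values are the limits in question.

By symmetry `s ↦ f[s, l]` is the smooth function `h` obtained from `f` by applying `dslope` at
every node of `l`. Applying Leibniz' rule to `h t = h s + (t - s) * dslope h s t` gives
`h⁽ᵏ⁾ s = k * (dslope h s)⁽ᵏ⁻¹⁾ s`, and iterating this, `∂ₛᵏ f[s, l] = k! f[s, …, s, l]` with
`k + 1` copies of `s`. Carrying this out for one variable after the other proves the theorem.
-/

open scoped ContDiff

section ParametricIntegral

variable {H E : Type*} [NormedAddCommGroup H] [NormedSpace ℝ H]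
  [NormedAddCommGroup E] [NormedSpace ℝ E]

theorem continuous_partial_fderiv {F : H → ℝ → E} (hF : ContDiff ℝ 1 (Function.uncurry F)) :
    Continuous fun q : H × ℝ => fderiv ℝ (fun y => F y q.2) q.1 :=
  (ContDiff.fderiv (n := 0) (f := fun q y => F y q.2) (by fun_prop) contDiff_fst
    (by simp)).continuous

variable [FiniteDimensional ℝ H]

theorem hasFDerivAt_parametric_intervalIntegral {F : H → ℝ → E}
    (hF : ContDiff ℝ 1 (Function.uncurry F)) (a b : ℝ) (x : H) :
    HasFDerivAt (fun x => ∫ s in a..b, F x s)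
      (∫ s in a..b, fderiv ℝ (fun y => F y s) x) x := by
  have hF_cont : Continuous (Function.uncurry F) := hF.continuous
  have hF'_cont := continuous_partial_fderiv hF
  have := FiniteDimensional.proper ℝ H
  obtain ⟨C, hC⟩ := ((isCompact_closedBall x 1).prod
    (isCompact_uIcc (a := a) (b := b))).exists_bound_of_continuousOn hF'_cont.continuousOn
  refine intervalIntegral.hasFDerivAt_integral_of_dominated_of_fderiv_le
    (F' := fun y s => fderiv ℝ (fun y => F y s) y) (bound := fun _ => C)
    (Metric.closedBall_mem_nhds x one_pos) ?_ ?_ ?_ ?_ intervalIntegrable_const ?_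
  · exact .of_forall fun y => Continuous.aestronglyMeasurable (by fun_prop)
  · exact Continuous.intervalIntegrable (by fun_prop) a b
  · exact Continuous.aestronglyMeasurable (by fun_prop)
  · exact .of_forall fun s hs y hy => hC (y, s) ⟨hy, Set.uIoc_subset_uIcc hs⟩
  · refine .of_forall fun s _ y _ => DifferentiableAt.hasFDerivAt ?_
    have : ContDiff ℝ 1 fun y => F y s := by fun_prop
    exact this.differentiable one_ne_zero y

theorem contDiff_parametric_intervalIntegral {n : ℕ∞} {F : H → ℝ → E}
    (hF : ContDiff ℝ n (Function.uncurry F)) (a b : ℝ) :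
    ContDiff ℝ n fun x => ∫ s in a..b, F x s := by
  suffices h : ∀ (m : ℕ) (F : H → ℝ → E), ContDiff ℝ m (Function.uncurry F) →
      ContDiff ℝ m fun x => ∫ s in a..b, F x s from
    contDiff_iff_forall_nat_le.2 fun m hm => h m F (hF.of_le (by exact_mod_cast hm))
  intro m
  induction m with
  | zero =>
    intro F hF
    exact contDiff_zero.2 <|
      intervalIntegral.continuous_parametric_intervalIntegral_of_continuous' hF.continuous a b
  | succ m ih =>
    intro F hF
    rw [Nat.cast_add_one] at hF ⊢
    have hF_one : ContDiff ℝ 1 (Function.uncurry F) := hF.of_le (by simp)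
    have hasFDerivAt := hasFDerivAt_parametric_intervalIntegral hF_one a b
    refine contDiff_succ_iff_fderiv_apply.2
      ⟨fun x => (hasFDerivAt x).differentiableAt, fun h => absurd h (by simp), fun v => ?_⟩
    have fderiv_eq (x : H) : fderiv ℝ (fun x => ∫ s in a..b, F x s) x v =
        ∫ s in a..b, fderiv ℝ (fun y => F y s) x v := by
      rw [(hasFDerivAt x).fderiv]
      refine ContinuousLinearMap.intervalIntegral_apply (Continuous.intervalIntegrable ?_ a b) v
      exact (continuous_partial_fderiv hF_one).comp (by fun_prop : Continuous fun s => (x, s))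
    simp only [fderiv_eq]
    refine ih _ ?_
    exact ContDiff.fderiv_apply (f := fun (q : H × ℝ) y => F y q.2) (m := m + 1)
      (by fun_prop) contDiff_fst contDiff_const le_rfl

end ParametricIntegral

section DSlope

variable {𝕜 E : Type*} [NontriviallyNormedField 𝕜] [NormedAddCommGroup E] [NormedSpace 𝕜 E]

theorem dslope_symm (f : 𝕜 → E) (x y : 𝕜) : dslope f x y = dslope f y x := by
  rcases eq_or_ne x y with rfl | hxy
  · rfl
  · rw [dslope_of_ne f hxy.symm, dslope_of_ne f hxy, slope_comm]

theorem continuous_dslope_dslope {f : 𝕜 → E} (hf : Differentiable 𝕜 f) {x y : 𝕜} (hxy : x ≠ y) :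
    Continuous (dslope (dslope f x) y) := by
  refine continuous_iff_continuousAt.2 fun z => ?_
  rcases eq_or_ne z y with rfl | hzy
  · exact continuousAt_dslope_same.2 ((differentiableAt_dslope_of_ne hxy.symm).2 (hf z))
  refine (continuousAt_dslope_of_ne hzy).2 ?_
  rcases eq_or_ne z x with rfl | hzx
  · exact continuousAt_dslope_same.2 (hf z)
  · exact (continuousAt_dslope_of_ne hzx).2 (hf z).continuousAt

theorem dslope_dslope_comm {f : 𝕜 → E} (hf : Differentiable 𝕜 f) (x y : 𝕜) :
    dslope (dslope f x) y = dslope (dslope f y) x := by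
  rcases eq_or_ne x y with rfl | hxy
  · rfl
  refine Continuous.ext_on (s := ({x, y} : Set 𝕜)ᶜ) ?_ (continuous_dslope_dslope hf hxy)
    (continuous_dslope_dslope hf hxy.symm) fun z hz => ?_
  · simpa [Set.compl_eq_univ_sdiff] using dense_univ.sdiff_finite (Set.toFinite {x, y})
  obtain ⟨hzx, hzy⟩ : z ≠ x ∧ z ≠ y := by simpa using hz
  rw [dslope_of_ne _ hzy, dslope_of_ne _ hzx, slope_def_module, slope_def_module,
    dslope_of_ne _ hzx, dslope_of_ne _ hxy.symm, dslope_of_ne _ hzy, dslope_of_ne _ hxy]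
  simp only [slope_def_module]
  have hzx' : z - x ≠ 0 := sub_ne_zero.2 hzx
  have hzy' : z - y ≠ 0 := sub_ne_zero.2 hzy
  have hyx' : y - x ≠ 0 := sub_ne_zero.2 hxy.symm
  match_scalars <;> grind

end DSlope

section SmoothDSlope

theorem dslope_eq_intervalIntegral_deriv {𝕜 E : Type*} [RCLike 𝕜] [NormedAddCommGroup E]
    [NormedSpace ℝ E] [NormedSpace 𝕜 E] [IsScalarTower ℝ 𝕜 E] [CompleteSpace E]
    {f : 𝕜 → E} (hf : ContDiff 𝕜 1 f) (x y : 𝕜) :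
    dslope f x y = ∫ s in (0 : ℝ)..1, deriv f (x + s • (y - x)) := by
  rcases eq_or_ne y x with rfl | hyx
  · simp
  have hf'_cont : Continuous (deriv f) := hf.continuous_deriv le_rfl
  have integral_smul : (y - x) • ∫ s in (0 : ℝ)..1, deriv f (x + s • (y - x)) = f y - f x := by
    simpa using intervalIntegral.integral_unitInterval_deriv_eq_sub (z₀ := x) (z₁ := y - x)
      (by fun_prop) fun s _ => (hf.differentiable one_ne_zero _).hasDerivAt
  exact smul_right_injective E (sub_ne_zero.2 hyx) (by simp [integral_smul, sub_smul_dslope])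

variable {P E : Type*} [NormedAddCommGroup P] [NormedSpace ℝ P] [FiniteDimensional ℝ P]
  [NormedAddCommGroup E] [NormedSpace ℝ E] [CompleteSpace E]

theorem contDiff_parametric_dslope {n : ℕ∞} {F : P → ℝ → E} {a b : P → ℝ}
    (hF : ContDiff ℝ (n + 1) (Function.uncurry F)) (ha : ContDiff ℝ n a) (hb : ContDiff ℝ n b) :
    ContDiff ℝ n fun p => dslope (F p) (a p) (b p) := by
  have hFp (p : P) : ContDiff ℝ 1 (F p) := by
    have : ContDiff ℝ (n + 1) (F p) := by fun_prop
    exact this.of_le (by simp)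
  simp only [fun p => dslope_eq_intervalIntegral_deriv (hFp p), ← fderiv_apply_one_eq_deriv]
  refine contDiff_parametric_intervalIntegral ?_ 0 1
  exact ContDiff.fderiv_apply (f := fun (q : P × ℝ) => F q.1) (m := n + 1)
    (by fun_prop) (by fun_prop) contDiff_const le_rfl

theorem contDiff_dslope {n : ℕ∞} {f : ℝ → E} (hf : ContDiff ℝ (n + 1) f) (x : ℝ) :
    ContDiff ℝ n (dslope f x) :=
  contDiff_parametric_dslope (F := fun _ => f) (by fun_prop) contDiff_const contDiff_id

end SmoothDSlope

theorem iteratedDeriv_succ_sub_smul {𝕜 E : Type*} [NontriviallyNormedField 𝕜]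
    [NormedAddCommGroup E] [NormedSpace 𝕜 E] {g : 𝕜 → E} {k : ℕ}
    (hg : ContDiff 𝕜 (k + 1) g) (a t : 𝕜) :
    iteratedDeriv (k + 1) (fun s => (s - a) • g s) t =
      (t - a) • iteratedDeriv (k + 1) g t + (k + 1 : 𝕜) • iteratedDeriv k g t := by
  have hasDerivAt_sub_smul {h : 𝕜 → E} {h' : E} {t : 𝕜} (hh : HasDerivAt h h' t) :
      HasDerivAt (fun s => (s - a) • h s) ((t - a) • h' + h t) t := by
    simpa using ((hasDerivAt_id t).sub_const a).fun_smul hh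
  induction k generalizing t with
  | zero =>
    simpa using (hasDerivAt_sub_smul (hg.differentiable (by simp) t).hasDerivAt).deriv
  | succ k ih =>
    have hasDerivAt_iteratedDeriv {j : ℕ} (hj : j < k + 2) :
        HasDerivAt (iteratedDeriv j g) (iteratedDeriv (j + 1) g t) t := by
      rw [iteratedDeriv_succ]
      exact (hg.differentiable_iteratedDeriv j (by exact_mod_cast hj) t).hasDerivAt
    have hasDerivAt_add := (hasDerivAt_sub_smul (hasDerivAt_iteratedDeriv (j := k + 1)
      (by lia))).fun_add ((hasDerivAt_iteratedDeriv (j := k) (by lia)).fun_const_smul (k + 1 : 𝕜))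
    rw [iteratedDeriv_succ, funext fun t => ih (hg.of_le (by gcongr; simp)) t, hasDerivAt_add.deriv]
    push_cast
    module

section HermiteDivDiff

variable {𝕜 E : Type*} [NontriviallyNormedField 𝕜] [NormedAddCommGroup E] [NormedSpace 𝕜 E]

/-- Divided difference of a differentiable function at a list of possibly repeated nodes. The
recursion `f[x, y, …] = (f[x, ·])[y, …]` peels off one node at a time through `dslope`, which is
the slope at distinct nodes and the derivative at coinciding ones. As for `divDiff`, the value at
the empty list is `0`. -/
noncomputable def hermiteDivDiff (f : 𝕜 → E) : List 𝕜 → E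
  | [] => 0
  | [x] => f x
  | x :: y :: l => hermiteDivDiff (dslope f x) (y :: l)

theorem hermiteDivDiff_cons (f : 𝕜 → E) (x : 𝕜) {l : List 𝕜} (hl : l ≠ []) :
    hermiteDivDiff f (x :: l) = hermiteDivDiff (dslope f x) l := by
  cases l with
  | nil => contradiction
  | cons y l => rfl

theorem hermiteDivDiff_append (f : 𝕜 → E) (l : List 𝕜) {l' : List 𝕜} (hl' : l' ≠ []) :
    hermiteDivDiff f (l ++ l') = hermiteDivDiff (l.foldl dslope f) l' := by
  induction l generalizing f with
  | nil => rfl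
  | cons x l ih =>
    rw [List.cons_append, hermiteDivDiff_cons f x (by simp [hl']), ih, List.foldl_cons]

theorem hermiteDivDiff_append_sub_append (f : 𝕜 → E) (l : List 𝕜) (x y : 𝕜) :
    hermiteDivDiff f (l ++ [y]) - hermiteDivDiff f (l ++ [x]) =
      (y - x) • hermiteDivDiff f (l ++ [x, y]) := by
  simp only [hermiteDivDiff_append f l (List.cons_ne_nil _ _), hermiteDivDiff, sub_smul_dslope]

end HermiteDivDiff

section Smooth

variable {E : Type*} [NormedAddCommGroup E] [NormedSpace ℝ E] [CompleteSpace E] {f : ℝ → E}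

theorem contDiff_infty_dslope (hf : ContDiff ℝ ∞ f) (x : ℝ) : ContDiff ℝ ∞ (dslope f x) :=
  contDiff_dslope (n := ⊤) hf x

theorem contDiff_infty_foldl_dslope (hf : ContDiff ℝ ∞ f) (l : List ℝ) :
    ContDiff ℝ ∞ (l.foldl dslope f) := by
  induction l generalizing f with
  | nil => exact hf
  | cons x l ih => exact ih (contDiff_infty_dslope hf x)

theorem hermiteDivDiff_perm {l l' : List ℝ} (hl : l.Perm l') (hf : ContDiff ℝ ∞ f) :
    hermiteDivDiff f l = hermiteDivDiff f l' := by
  induction hl generalizing f with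
  | nil => rfl
  | @cons x l l' hl ih =>
    rcases eq_or_ne l [] with rfl | hne
    · rw [List.nil_perm.1 hl]
    · rw [hermiteDivDiff_cons f x hne, hermiteDivDiff_cons f x (by rintro rfl; exact hne hl.eq_nil),
        ih (contDiff_infty_dslope hf x)]
  | swap x y l =>
    cases l with
    | nil => exact dslope_symm f y x
    | cons z l =>
      simp only [hermiteDivDiff, dslope_dslope_comm (hf.differentiable (by simp)) y x]
  | trans _ _ ih ih' => rw [ih hf, ih' hf]

theorem contDiff_hermiteDivDiff_map {P : Type*} [NormedAddCommGroup P] [NormedSpace ℝ P]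
    [FiniteDimensional ℝ P] {F : P → ℝ → E} (hF : ContDiff ℝ ∞ (Function.uncurry F))
    (L : List (P → ℝ)) (hL : ∀ g ∈ L, ContDiff ℝ ∞ g) :
    ContDiff ℝ ∞ fun p => hermiteDivDiff (F p) (L.map (· p)) := by
  induction L generalizing F with
  | nil => exact contDiff_const
  | cons g L ih =>
    have hg : ContDiff ℝ ∞ g := hL g List.mem_cons_self
    cases L with
    | nil => exact hF.comp (contDiff_id.prodMk hg)
    | cons g' L =>
      refine ih (F := fun p => dslope (F p) (g p)) ?_ fun h hh => hL h (List.mem_cons_of_mem g hh)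
      exact contDiff_parametric_dslope (n := ⊤) (F := fun q : P × ℝ => F q.1)
        (by fun_prop) (by fun_prop) contDiff_snd

theorem iteratedDeriv_succ_eq_smul_iteratedDeriv_dslope (hf : ContDiff ℝ ∞ f) (a : ℝ) (k : ℕ) :
    iteratedDeriv (k + 1) f a = (k + 1 : ℝ) • iteratedDeriv k (dslope f a) a := by
  have f_eq : f = fun t => f a + (t - a) • dslope f a t := by
    ext t
    rw [sub_smul_dslope, add_sub_cancel]
  conv_lhs => rw [f_eq]
  rw [iteratedDeriv_const_add (by simp),
    iteratedDeriv_succ_sub_smul ((contDiff_infty_dslope hf a).of_le (by exact_mod_cast le_top))]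
  simp

theorem iteratedDeriv_eq_factorial_smul_hermiteDivDiff (hf : ContDiff ℝ ∞ f) (k : ℕ) (a : ℝ) :
    iteratedDeriv k f a = (k.factorial : ℝ) • hermiteDivDiff f (List.replicate (k + 1) a) := by
  induction k generalizing f with
  | zero => simp [hermiteDivDiff]
  | succ k ih =>
    rw [iteratedDeriv_succ_eq_smul_iteratedDeriv_dslope hf, ih (contDiff_infty_dslope hf a),
      smul_smul, List.replicate_succ (n := k + 1), hermiteDivDiff_cons f a (by simp),
      Nat.factorial_succ]
    push_cast
    rfl

theorem iteratedDeriv_hermiteDivDiff_cons (hf : ContDiff ℝ ∞ f) (l : List ℝ) (k : ℕ) (a : ℝ) :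
    iteratedDeriv k (fun s => hermiteDivDiff f (s :: l)) a =
      (k.factorial : ℝ) • hermiteDivDiff f (List.replicate (k + 1) a ++ l) := by
  have eq_foldl : (fun s => hermiteDivDiff f (s :: l)) = l.foldl dslope f := by
    ext s
    rw [hermiteDivDiff_perm (List.perm_append_singleton s l).symm hf,
      hermiteDivDiff_append f l (List.cons_ne_nil s []), hermiteDivDiff]
  rw [eq_foldl, iteratedDeriv_eq_factorial_smul_hermiteDivDiff (contDiff_infty_foldl_dslope hf l),
    hermiteDivDiff_perm List.perm_append_comm hf, hermiteDivDiff_append f l (by simp)]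

end Smooth

section DivDiff

theorem divDiff_cons_append_singleton {K : Type*} [Field K] (f : K → K) (x : K) (l : List K)
    (z : K) :
    divDiff f (x :: (l ++ [z])) = (divDiff f (l ++ [z]) - divDiff f (x :: l)) / (z - x) := by
  obtain ⟨y, l', hl⟩ := List.exists_cons_of_ne_nil (l := l ++ [z]) (by simp)
  rw [hl, divDiff]
  simp only [← hl, List.dropLast_concat, List.getLast_append_singleton]

theorem divDiff_eq_hermiteDivDiff {f : ℝ → ℝ} (hf : ContDiff ℝ ∞ f) (l : List ℝ)
    (hl : l.Nodup) : divDiff f l = hermiteDivDiff f l := by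
  induction hn : l.length generalizing l with
  | zero => simp [List.length_eq_zero_iff.1 hn, divDiff, hermiteDivDiff]
  | succ n ih =>
    obtain ⟨x, l, rfl⟩ := List.exists_cons_of_length_eq_add_one hn
    rcases List.eq_nil_or_concat' l with rfl | ⟨l, z, rfl⟩
    · simp [divDiff, hermiteDivDiff]
    have hzx : z - x ≠ 0 := sub_ne_zero.2 (by grind)
    have hperm : (x :: (l ++ [z])).Perm (l ++ [x, z]) := List.perm_middle.symm
    rw [divDiff_cons_append_singleton, ih (l ++ [z]) (by grind) (by grind),
      ih (x :: l) (by grind) (by grind), hermiteDivDiff_perm hperm hf,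
      hermiteDivDiff_perm (List.perm_append_singleton x l).symm hf,
      hermiteDivDiff_append_sub_append, smul_eq_mul, mul_div_cancel_left₀ _ hzx]

end DivDiff

section RepeatNodes

/-- The list of nodes in which `y i` is repeated `c i + 1` times: `c i` counts the extra copies,
so that `c = 0` gives the simple nodes. -/
def repeatNodes {α : Type*} {m : ℕ} (c : Fin m → ℕ) (y : Fin m → α) : List α :=
  (List.ofFn fun i => List.replicate (c i + 1) (y i)).flatten

theorem repeatNodes_zero {α : Type*} {m : ℕ} (y : Fin m → α) :
    repeatNodes (fun _ => 0) y = List.ofFn y := by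
  rw [repeatNodes, List.ofFn_eq_map, List.ofFn_eq_map, ← List.flatMap_def, List.map_eq_flatMap]
  rfl

theorem exists_repeatNodes_update_perm {α : Type*} {m : ℕ} (c : Fin m → ℕ) (y : Fin m → α)
    (i : Fin m) : ∃ l : List α, ∀ q s,
      (repeatNodes (Function.update c i q) (Function.update y i s)).Perm
        (List.replicate (q + 1) s ++ l) := by
  refine ⟨(((List.finRange m).erase i).map fun j => List.replicate (c j + 1) (y j)).flatten,
    fun q s => ?_⟩
  have hperm : (List.finRange m).Perm (i :: (List.finRange m).erase i) :=
    List.perm_cons_erase (List.mem_finRange i)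
  rw [repeatNodes, List.ofFn_eq_map]
  refine (hperm.map _).flatten.trans (.of_eq ?_)
  rw [List.map_cons, List.flatten_cons, Function.update_self, Function.update_self]
  congr 2
  refine List.map_congr_left fun j hj => ?_
  have hji : j ≠ i := ((List.nodup_finRange m).mem_erase_iff.1 hj).1
  rw [Function.update_of_ne hji, Function.update_of_ne hji]

end RepeatNodes

theorem isOpen_setOf_injective {ι X : Type*} [Finite ι] [TopologicalSpace X] [T2Space X] :
    IsOpen {y : ι → X | Function.Injective y} := by
  simp only [Function.injective_iff_pairwise_ne, Pairwise, Function.onFun, Set.ofPred_forall]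
  exact isOpen_iInter_of_finite fun i => isOpen_iInter_of_finite fun j =>
    isOpen_iInter_of_finite fun _ => isOpen_ne_fun (continuous_apply i) (continuous_apply j)

section PartialIter

variable {m : ℕ} {f : ℝ → ℝ}

theorem partialIter_hermiteDivDiff_repeatNodes (hf : ContDiff ℝ ∞ f) {g : (Fin m → ℝ) → ℝ}
    {c : Fin m → ℕ} {a : ℝ}
    (hg : ∀ y, Function.Injective y → g y = a * hermiteDivDiff f (repeatNodes c y))
    {i : Fin m} (hi : c i = 0) (k : ℕ) {y : Fin m → ℝ} (hy : Function.Injective y) :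
    partialIter g i k y =
      a * k.factorial * hermiteDivDiff f (repeatNodes (Function.update c i k) y) := by
  obtain ⟨l, hl⟩ := exists_repeatNodes_update_perm c y i
  have g_update : (fun s => g (Function.update y i s)) =ᶠ[𝓝 (y i)]
      fun s => a * hermiteDivDiff f (s :: l) := by
    have update_tendsto : Tendsto (Function.update y i) (𝓝 (y i)) (𝓝 y) := by
      simpa using (continuous_const.update (f := fun _ => y) i continuous_id).tendsto (y i)
    filter_upwards [update_tendsto.eventually (isOpen_setOf_injective.mem_nhds hy)] with s hs
    have hperm := hl 0 s
    rw [← hi, Function.update_eq_self, hi] at hperm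
    rw [hg _ hs, hermiteDivDiff_perm hperm hf]
    rfl
  have hperm := hl k (y i)
  rw [Function.update_eq_self] at hperm
  rw [partialIter, g_update.iteratedDeriv_eq, iteratedDeriv_const_mul_field,
    iteratedDeriv_hermiteDivDiff_cons hf, hermiteDivDiff_perm hperm hf, smul_eq_mul, mul_assoc]

theorem foldl_partialIter_divDiff (hf : ContDiff ℝ ∞ f) (k : Fin m → ℕ) {l : List (Fin m)}
    (hl : l.Nodup) {y : Fin m → ℝ} (hy : Function.Injective y) :
    l.foldl (fun g i => partialIter g i (k i)) (fun y => divDiff f (List.ofFn y)) y =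
      (l.map fun i => ((k i).factorial : ℝ)).prod *
        hermiteDivDiff f (repeatNodes (fun i => if i ∈ l then k i else 0) y) := by
  induction l using List.reverseRecOn generalizing y with
  | nil =>
    simp [divDiff_eq_hermiteDivDiff hf _ (List.nodup_ofFn.2 hy), repeatNodes_zero]
  | append_singleton l i ih =>
    have hil : i ∉ l := by grind
    have update_eq : Function.update (fun j => if j ∈ l then k j else 0) i (k i) =
        fun j => if j ∈ l ++ [i] then k j else 0 := by
      grind [Function.update_apply]
    rw [List.foldl_concat, partialIter_hermiteDivDiff_repeatNodes hf
      (fun y hy => ih (List.Nodup.of_append_left hl) hy) (if_neg hil) (k i) hy, update_eq]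
    simp

end PartialIter

theorem continuous_hermiteDivDiff_flatten_ofFn {f : ℝ → ℝ} (hf : ContDiff ℝ ∞ f) {m : ℕ}
    (r : Fin m → ℕ) :
    Continuous fun y : (i : Fin m) → Fin (r i) → ℝ =>
      hermiteDivDiff f (List.ofFn fun i => List.ofFn fun j => y i j).flatten := by
  let L : List (((i : Fin m) → Fin (r i) → ℝ) → ℝ) :=
    (List.ofFn fun i => List.ofFn fun j y => y i j).flatten
  have hL : ∀ g ∈ L, ContDiff ℝ ∞ g := by
    intro g hg
    obtain ⟨_, hi, hg⟩ := List.mem_flatten.1 hg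
    obtain ⟨i, rfl⟩ := List.mem_ofFn.1 hi
    obtain ⟨j, rfl⟩ := List.mem_ofFn.1 hg
    exact (ContinuousLinearMap.proj (R := ℝ) (φ := fun _ : Fin (r i) => ℝ) j ∘L
      ContinuousLinearMap.proj (φ := fun i => Fin (r i) → ℝ) i).contDiff
  simpa only [L, List.map_flatten, List.map_ofFn, Function.comp_def] using
    (contDiff_hermiteDivDiff_map (F := fun _ => f) (by fun_prop) L hL).continuous

/-- **Confluent divided difference formula**: for `f` smooth and distinct nodes
`x₀,…,xₙ`, the divided difference at the multiset where `xᵢ` is repeated `kᵢ + 1`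
times — defined as the limit of divided differences over pairwise-distinct nodes
coalescing to that multiset — equals
`(1/(k₀!⋯kₙ!)) ∂^{k₀}_{x₀} ⋯ ∂^{kₙ}_{xₙ} f[x₀,…,xₙ]`. -/
theorem confluent_divDiff (n : ℕ) (f : ℝ → ℝ) (hf : ContDiff ℝ (⊤ : ℕ∞) f)
    (x : Fin (n + 1) → ℝ) (hx : Function.Injective x) (k : Fin (n + 1) → ℕ) :
    Tendsto
      (fun y : (i : Fin (n + 1)) → Fin (k i + 1) → ℝ =>
        divDiff f ((List.ofFn fun i => List.ofFn fun j => y i j).flatten))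
      (nhdsWithin (fun i _ => x i)
        {y | ((List.ofFn fun i => List.ofFn fun j => y i j).flatten).Nodup})
      (nhds ((∏ i, ((k i).factorial : ℝ))⁻¹ *
        (((List.finRange (n + 1)).foldl (fun g i => partialIter g i (k i))
          (fun y => divDiff f (List.ofFn y))) x))) := by
  set nodes : ((i : Fin (n + 1)) → Fin (k i + 1) → ℝ) → List ℝ :=
    fun y => (List.ofFn fun i => List.ofFn fun j => y i j).flatten
  have limit_eq : (∏ i, ((k i).factorial : ℝ))⁻¹ *
      (List.finRange (n + 1)).foldl (fun g i => partialIter g i (k i))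
        (fun y => divDiff f (List.ofFn y)) x = hermiteDivDiff f (nodes fun i _ => x i) := by
    have prod_ne_zero : ∏ i, ((k i).factorial : ℝ) ≠ 0 :=
      Finset.prod_ne_zero_iff.2 fun i _ => Nat.cast_ne_zero.2 (k i).factorial_ne_zero
    rw [foldl_partialIter_divDiff hf k (List.nodup_finRange _) hx, ← List.ofFn_eq_map,
      List.prod_ofFn, inv_mul_cancel_left₀ prod_ne_zero]
    simp only [repeatNodes, nodes, List.mem_finRange, if_true, List.ofFn_const]
  rw [limit_eq]
  refine (continuous_hermiteDivDiff_flatten_ofFn hf _).continuousWithinAt.tendsto.congr' ?_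
  filter_upwards [self_mem_nhdsWithin] with y hy
  exact (divDiff_eq_hermiteDivDiff hf _ hy).symm
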